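/- With B_1, B_2, K as in the coideal subalgebra of U_q(sl3), and C_1 = B_1 B_2 - q B_2 B_1 - c_2 K/(q-q^{-1}) + (q+q^{-1}) c_1 K^{-1}/(q-q^{-1}), C_2 = B_2 B_1 - q B_1 B_2 - c_1 K^{-1}/(q-q^{-1}) + (q+q^{-1}) c_2 K/(q-q^{-1}), one has [C_1, C_2] = 0 and [K, C_i] = 0 for i = 1, 2. -/

import Mathlib

noncomputable section

/-- The defining relations of `U_q(sl3)` inside a `ℂ`-algebra `R`, with real `q`. -/
structure UqSL3 (R : Type*) [Ring R] [Algebra ℂ R] (q : ℝ)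
    (E₁ E₂ F₁ F₂ K₁ K₁' K₂ K₂' : R) : Prop where
  K₁mul : K₁ * K₁' = 1
  K₁mul' : K₁' * K₁ = 1
  K₂mul : K₂ * K₂' = 1
  K₂mul' : K₂' * K₂ = 1
  Kcomm : K₁ * K₂ = K₂ * K₁
  Kcomm' : K₁ * K₂' = K₂' * K₁
  Kcomm'' : K₁' * K₂ = K₂ * K₁'
  KE11 : K₁ * E₁ = ((q:ℂ) ^ (2:ℤ)) • (E₁ * K₁)
  KE12 : K₁ * E₂ = ((q:ℂ) ^ (-1:ℤ)) • (E₂ * K₁)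
  KE21 : K₂ * E₁ = ((q:ℂ) ^ (-1:ℤ)) • (E₁ * K₂)
  KE22 : K₂ * E₂ = ((q:ℂ) ^ (2:ℤ)) • (E₂ * K₂)
  KF11 : K₁ * F₁ = ((q:ℂ) ^ (-2:ℤ)) • (F₁ * K₁)
  KF12 : K₁ * F₂ = ((q:ℂ) ^ (1:ℤ)) • (F₂ * K₁)
  KF21 : K₂ * F₁ = ((q:ℂ) ^ (1:ℤ)) • (F₁ * K₂)
  KF22 : K₂ * F₂ = ((q:ℂ) ^ (-2:ℤ)) • (F₂ * K₂)
  EF11 : E₁ * F₁ - F₁ * E₁ = ((q:ℂ) - (q:ℂ)⁻¹)⁻¹ • (K₁ - K₁')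
  EF22 : E₂ * F₂ - F₂ * E₂ = ((q:ℂ) - (q:ℂ)⁻¹)⁻¹ • (K₂ - K₂')
  EF12 : E₁ * F₂ = F₂ * E₁
  EF21 : E₂ * F₁ = F₁ * E₂
  serreE₁ : E₁ ^ 2 * E₂ - ((q:ℂ) + (q:ℂ)⁻¹) • (E₁ * E₂ * E₁) + E₂ * E₁ ^ 2 = 0
  serreE₂ : E₂ ^ 2 * E₁ - ((q:ℂ) + (q:ℂ)⁻¹) • (E₂ * E₁ * E₂) + E₁ * E₂ ^ 2 = 0
  serreF₁ : F₁ ^ 2 * F₂ - ((q:ℂ) + (q:ℂ)⁻¹) • (F₁ * F₂ * F₁) + F₂ * F₁ ^ 2 = 0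
  serreF₂ : F₂ ^ 2 * F₁ - ((q:ℂ) + (q:ℂ)⁻¹) • (F₂ * F₁ * F₂) + F₁ * F₂ ^ 2 = 0
section SkewCommutation

theorem reassoc {S : Type*} [Semigroup S] {x y z : S} (h : x * y = z) (w : S) :
    x * (y * w) = z * w := by
  rw [← mul_assoc, h]

variable {R : Type*} [Ring R] [Algebra ℂ R]

/-- Skew commutation with a unit gives skew commutation with its inverse. -/
theorem skew_inv {u v a : R} {c : ℂ} (hvu : v * u = 1) (huv : u * v = 1) (hc : c ≠ 0)
    (h : u * a = c • (a * u)) : v * a = c⁻¹ • (a * v) := by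
  have : v * (u * a) * v = c • (v * (a * u) * v) := by
    rw [h, mul_smul_comm, smul_mul_assoc]
  rw [← mul_assoc v u a, hvu, one_mul, mul_assoc v (a * u) v, mul_assoc a u v, huv, mul_one] at this
  rw [this, inv_smul_smul₀ hc]

theorem skew_mul {u v a : R} {c d : ℂ} (hu : u * a = c • (a * u)) (hv : v * a = d • (a * v)) :
    u * v * a = (c * d) • (a * (u * v)) := by
  rw [mul_assoc, hv, mul_smul_comm, ← mul_assoc, hu, smul_mul_assoc, smul_smul, mul_assoc, mul_comm]

theorem skew_left {u e w : R} {c d : ℂ} (hu : u * e = c • (e * u)) (hw : u * w = d • (w * u)) :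
    u * (e * w) = (c * d) • (e * w * u) := by
  rw [← mul_assoc, hu, smul_mul_assoc, mul_assoc, hw, mul_smul_comm, smul_smul, mul_assoc]

end SkewCommutation

namespace UqSL3

variable {R : Type*} [Ring R] [Algebra ℂ R] {q : ℝ} {E₁ E₂ F₁ F₂ K₁ K₁' K₂ K₂' : R}

/-- The diagram automorphism exchanging the two nodes preserves the defining relations. -/
theorem swap (h : UqSL3 R q E₁ E₂ F₁ F₂ K₁ K₁' K₂ K₂') :
    UqSL3 R q E₂ E₁ F₂ F₁ K₂ K₂' K₁ K₁' where
  K₁mul := h.K₂mul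
  K₁mul' := h.K₂mul'
  K₂mul := h.K₁mul
  K₂mul' := h.K₁mul'
  Kcomm := h.Kcomm.symm
  Kcomm' := h.Kcomm''.symm
  Kcomm'' := h.Kcomm'.symm
  KE11 := h.KE22
  KE12 := h.KE21
  KE21 := h.KE12
  KE22 := h.KE11
  KF11 := h.KF22
  KF12 := h.KF21
  KF21 := h.KF12
  KF22 := h.KF11
  EF11 := h.EF22
  EF22 := h.EF11
  EF12 := h.EF21
  EF21 := h.EF12
  serreE₁ := h.serreE₂
  serreE₂ := h.serreE₁
  serreF₁ := h.serreF₂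
  serreF₂ := h.serreF₁

/-- `K₁ K₂⁻¹` skew-commutes with the generator `B₁` of the coideal subalgebra. -/
theorem K_mul_B₁ (h : UqSL3 R q E₁ E₂ F₁ F₂ K₁ K₁' K₂ K₂') (hq : (q : ℂ) ≠ 0) (c₁ : ℂ) :
    K₁ * K₂' * (F₁ - c₁ • (E₂ * K₁')) =
      ((q : ℂ) ^ (-3 : ℤ)) • ((F₁ - c₁ • (E₂ * K₁')) * (K₁ * K₂')) := by
  have hz (n : ℤ) : (q : ℂ) ^ n ≠ 0 := zpow_ne_zero n hq
  have hF : K₁ * K₂' * F₁ = ((q : ℂ) ^ (-3 : ℤ)) • (F₁ * (K₁ * K₂')) := by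
    rw [skew_mul h.KF11 (skew_inv h.K₂mul' h.K₂mul (hz _) h.KF21), ← zpow_neg, ← zpow_add₀ hq]
    norm_num
  have hE : K₁ * K₂' * E₂ = ((q : ℂ) ^ (-3 : ℤ)) • (E₂ * (K₁ * K₂')) := by
    rw [skew_mul h.KE12 (skew_inv h.K₂mul' h.K₂mul (hz _) h.KE22), ← zpow_neg, ← zpow_add₀ hq]
    norm_num
  have hK : K₁ * K₂' * K₁' = K₁' * (K₁ * K₂') := by
    rw [h.Kcomm', mul_assoc, h.K₁mul, ← h.Kcomm', ← mul_assoc, h.K₁mul', mul_one, one_mul]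
  have hX : K₁ * K₂' * (E₂ * K₁') = ((q : ℂ) ^ (-3 : ℤ)) • (E₂ * K₁' * (K₁ * K₂')) := by
    rw [skew_left hE (d := 1) (by rw [hK, one_smul]), mul_one]
  rw [mul_sub, sub_mul, hF, mul_smul_comm, hX, smul_mul_assoc, smul_sub, smul_comm c₁]

/-- The inhomogeneous quantum Serre relation in the coideal subalgebra. -/
theorem coideal_serre (h : UqSL3 R q E₁ E₂ F₁ F₂ K₁ K₁' K₂ K₂') (hq : (q : ℂ) ≠ 0)
    (hq2 : (q : ℂ) ^ 2 - 1 ≠ 0) (c₁ c₂ : ℂ) {B₁ B₂ : R}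
    (hB₁ : B₁ = F₁ - c₁ • (E₂ * K₁')) (hB₂ : B₂ = F₂ - c₂ • (E₁ * K₂')) :
    B₁ * B₁ * B₂ - ((q : ℂ) + (q : ℂ)⁻¹) • (B₁ * B₂ * B₁) + B₂ * B₁ * B₁ =
      ((q : ℂ) + (q : ℂ)⁻¹) • (B₁ * (((q : ℂ) * c₁) • (K₁' * K₂) +
        ((q : ℂ) ^ (-2 : ℤ) * c₂) • (K₁ * K₂'))) := by
  have hz (n : ℤ) : (q : ℂ) ^ n ≠ 0 := zpow_ne_zero n hq
  have hKc : K₁' * K₂' = K₂' * K₁' := by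
    have := skew_inv (a := K₂') (c := 1) h.K₁mul' h.K₁mul one_ne_zero
      (by rw [one_smul, h.Kcomm'])
    simpa using this
  have k1E1 := skew_inv h.K₁mul' h.K₁mul (hz _) h.KE11
  have k1E2 := skew_inv h.K₁mul' h.K₁mul (hz _) h.KE12
  have k2E2 := skew_inv h.K₂mul' h.K₂mul (hz _) h.KE22
  have k1F1 := skew_inv h.K₁mul' h.K₁mul (hz _) h.KF11
  have k1F2 := skew_inv h.K₁mul' h.K₁mul (hz _) h.KF12
  have k2F1 := skew_inv h.K₂mul' h.K₂mul (hz _) h.KF21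
  have e11 := sub_eq_iff_eq_add.mp h.EF11
  have e22 := sub_eq_iff_eq_add.mp h.EF22
  have sF : F₁ * (F₁ * F₂) =
      ((q : ℂ) + (q : ℂ)⁻¹) • (F₁ * (F₂ * F₁)) - F₂ * (F₁ * F₁) := by
    have := h.serreF₁
    simp only [pow_two, mul_assoc] at this
    rw [← sub_eq_zero, ← this]; abel
  have sE (w : R) : E₂ * (E₂ * (E₁ * w)) =
      ((q : ℂ) + (q : ℂ)⁻¹) • (E₂ * (E₁ * (E₂ * w))) - E₁ * (E₂ * (E₂ * w)) := by
    have := congrArg (· * w) h.serreE₂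
    simp only [pow_two, mul_assoc, add_mul, sub_mul, smul_mul_assoc, zero_mul] at this
    rw [← sub_eq_zero, ← this]; abel
  subst hB₁ hB₂
  simp only [mul_add, add_mul, mul_sub, sub_mul, smul_mul_assoc, mul_smul_comm, mul_assoc,
    k2E2, k1F1, k1F2, k2F1, reassoc k1E1, reassoc k1E2, reassoc k2E2, reassoc k1F2, reassoc k2F1,
    h.KF11, reassoc h.KE12, reassoc h.KE22, reassoc h.KF21, reassoc e11, reassoc e22,
    reassoc h.EF21,
    h.Kcomm'', hKc, reassoc hKc, reassoc h.Kcomm'', h.Kcomm', reassoc h.Kcomm',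
    h.K₁mul, h.K₁mul', sF, sE, smul_add, smul_sub, smul_smul, mul_one]
  match_scalars <;> field_simp <;> ring

end UqSL3

theorem stmt {R : Type*} [Ring R] [Algebra ℂ R] (q : ℝ) (hq0 : 0 < q) (hq1 : q < 1)
    (c₁ c₂ : ℂ) (hc₁ : c₁ ≠ 0) (hc₂ : c₂ ≠ 0)
    (E₁ E₂ F₁ F₂ K₁ K₁' K₂ K₂' : R)
    (h : UqSL3 R q E₁ E₂ F₁ F₂ K₁ K₁' K₂ K₂') (B₁ B₂ K K' C₁ : R)
    (hB₁ : B₁ = F₁ - c₁ • (E₂ * K₁')) (hB₂ : B₂ = F₂ - c₂ • (E₁ * K₂'))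
    (hK : K = K₁ * K₂') (hK' : K' = K₁' * K₂)
    (hC₁ : C₁ = B₁ * B₂ - (q:ℂ) • (B₂ * B₁)
      - (c₂ / ((q:ℂ) - (q:ℂ)⁻¹)) • K + ((((q:ℂ) + (q:ℂ)⁻¹) * c₁) / ((q:ℂ) - (q:ℂ)⁻¹)) • K') (C₂ : R)
    (hC₂ : C₂ = B₂ * B₁ - (q:ℂ) • (B₁ * B₂)
      - (c₁ / ((q:ℂ) - (q:ℂ)⁻¹)) • K' + ((((q:ℂ) + (q:ℂ)⁻¹) * c₂) / ((q:ℂ) - (q:ℂ)⁻¹)) • K) :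
    C₁ * C₂ = C₂ * C₁ ∧ K * C₁ = C₁ * K ∧ K * C₂ = C₂ * K := by
  have hq : (q : ℂ) ≠ 0 := by exact_mod_cast hq0.ne'
  have hq2 : (q : ℂ) ^ 2 - 1 ≠ 0 := by
    have : q ^ 2 - 1 ≠ 0 := by nlinarith
    exact_mod_cast this
  have hKK' : K * K' = 1 := by
    rw [hK, hK', h.Kcomm'', mul_assoc, ← mul_assoc K₂', h.K₂mul', one_mul, h.K₁mul]
  have hK'K : K' * K = 1 := by
    rw [hK, hK', h.Kcomm', mul_assoc, ← mul_assoc K₂, h.K₂mul, one_mul, h.K₁mul']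
  have hz : (q : ℂ) ^ (-3 : ℤ) ≠ 0 := zpow_ne_zero _ hq
  have hz' : (q : ℂ) ^ (-3 : ℤ) * ((q : ℂ) ^ (-3 : ℤ))⁻¹ = 1 := mul_inv_cancel₀ hz
  have hKB₁ : K * B₁ = ((q : ℂ) ^ (-3 : ℤ)) • (B₁ * K) := by
    rw [hK, hB₁]; exact h.K_mul_B₁ hq c₁
  have hK'B₁ := skew_inv hK'K hKK' hz hKB₁
  have hK'B₂ : K' * B₂ = ((q : ℂ) ^ (-3 : ℤ)) • (B₂ * K') := by
    rw [hK', h.Kcomm'', hB₂]; exact h.swap.K_mul_B₁ hq c₂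
  have hKB₂ := skew_inv hKK' hK'K hz hK'B₂
  have S₁ := h.coideal_serre hq hq2 c₁ c₂ hB₁ hB₂
  have S₂ := h.swap.coideal_serre hq hq2 c₂ c₁ hB₂ hB₁
  rw [← hK, ← hK'] at S₁
  rw [← h.Kcomm', ← h.Kcomm'', ← hK, ← hK'] at S₂
  have Ka : Commute K (B₁ * B₂) := by
    rw [Commute, SemiconjBy, skew_left hKB₁ hKB₂, hz', one_smul]
  have Kb : Commute K (B₂ * B₁) := by
    rw [Commute, SemiconjBy, skew_left hKB₂ hKB₁, mul_comm, hz', one_smul]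
  have K'a : Commute K' (B₁ * B₂) := by
    rw [Commute, SemiconjBy, skew_left hK'B₁ hK'B₂, mul_comm, hz', one_smul]
  have K'b : Commute K' (B₂ * B₁) := by
    rw [Commute, SemiconjBy, skew_left hK'B₂ hK'B₁, hz', one_smul]
  have KK' : Commute K K' := hKK'.trans hK'K.symm
  have hab : Commute (B₁ * B₂) (B₂ * B₁) := by
    have T₁ := congrArg (B₂ * ·) S₁
    have T₂ := congrArg (· * B₁) S₂
    simp only [mul_add, add_mul, mul_sub, sub_mul, smul_mul_assoc, mul_smul_comm, mul_assoc,
      hKB₁, hK'B₁, smul_add, smul_smul] at T₁ T₂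
    rw [Commute, SemiconjBy, ← sub_eq_zero]
    simp only [mul_assoc]
    refine Eq.trans ?_ ((congrArg₂ (· - ·) T₂ T₁).trans ?_)
    · abel
    · match_scalars <;> field_simp <;> ring
  have comm {x : R} (ha : Commute x (B₁ * B₂)) (hb : Commute x (B₂ * B₁))
      (hk : Commute x K) (hk' : Commute x K') : Commute x C₁ ∧ Commute x C₂ := by
    rw [hC₁, hC₂]
    exact ⟨((ha.sub_right (hb.smul_right _)).sub_right (hk.smul_right _)).add_right
        (hk'.smul_right _),
      ((hb.sub_right (ha.smul_right _)).sub_right (hk'.smul_right _)).add_right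
        (hk.smul_right _)⟩
  have cK := comm Ka Kb (Commute.refl K) KK'
  have cK' := comm K'a K'b KK'.symm (Commute.refl K')
  have ca := comm (Commute.refl _) hab Ka.symm K'a.symm
  have cb := comm hab.symm (Commute.refl _) Kb.symm K'b.symm
  exact ⟨((comm ca.1.symm cb.1.symm cK.1.symm cK'.1.symm).2), cK.1, cK.2⟩
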